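/- (Leakage lower bound from Example 2.) Let M₁ and M₂ be finite-valued random variables such that M₁ is conditionally independent of Yⁿ given Xⁿ and M₂ is conditionally independent of Xⁿ given Yⁿ. If H(Y_Xⁿ | M₂, Xⁿ) ≤ nε and H(Y_Xⁿ | M₁, Yⁿ) ≤ nε for some ε ≥ 0, then H(Y_{X̄}ⁿ | M₁, M₂) ≤ 4nε, and consequently I(M₁, M₂; Y_{X̄}ⁿ) ≥ n·log 2 − 4nε (entropies in nats). -/

import Mathlib

open scoped BigOperators

/-- A probability mass function on a finite type, given as a real-valued function. -/
def IsPMF {Ω : Type*} [Fintype Ω] (p : Ω → ℝ) : Prop :=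
  (∀ ω, 0 ≤ p ω) ∧ ∑ ω, p ω = 1

open Classical in
/-- Probability of an event under a pmf on a finite type. -/
noncomputable def probOf {Ω : Type*} [Fintype Ω] (p : Ω → ℝ) (E : Ω → Prop) : ℝ :=
  ∑ ω, if E ω then p ω else 0

/-- Distribution (pushforward) of a random variable `A` under pmf `p`. -/
noncomputable def distOf {Ω β : Type*} [Fintype Ω] [DecidableEq β]
    (p : Ω → ℝ) (A : Ω → β) : β → ℝ :=
  fun b => ∑ ω, if A ω = b then p ω else 0

/-- Shannon entropy (in nats) of a distribution on a finite type. -/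
noncomputable def entD {β : Type*} [Fintype β] (q : β → ℝ) : ℝ :=
  -∑ b, q b * Real.log (q b)

/-- Shannon entropy H(A) of a random variable `A` under pmf `p`. -/
noncomputable def entRV {Ω β : Type*} [Fintype Ω] [Fintype β] [DecidableEq β]
    (p : Ω → ℝ) (A : Ω → β) : ℝ :=
  entD (distOf p A)

/-- Conditional Shannon entropy H(A | C). -/
noncomputable def condEnt {Ω β γ : Type*} [Fintype Ω] [Fintype β] [DecidableEq β]
    [Fintype γ] [DecidableEq γ] (p : Ω → ℝ) (A : Ω → β) (C : Ω → γ) : ℝ :=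
  entRV p (fun ω => (A ω, C ω)) - entRV p C

/-- Mutual information I(A; B). -/
noncomputable def mutInfo {Ω β γ : Type*} [Fintype Ω] [Fintype β] [DecidableEq β]
    [Fintype γ] [DecidableEq γ] (p : Ω → ℝ) (A : Ω → β) (B : Ω → γ) : ℝ :=
  entRV p A + entRV p B - entRV p (fun ω => (A ω, B ω))

/-- Conditional mutual information I(A; B | C). -/
noncomputable def condMutInfo {Ω β γ δ : Type*} [Fintype Ω] [Fintype β] [DecidableEq β]
    [Fintype γ] [DecidableEq γ] [Fintype δ] [DecidableEq δ]
    (p : Ω → ℝ) (A : Ω → β) (B : Ω → γ) (C : Ω → δ) : ℝ :=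
  entRV p (fun ω => (A ω, C ω)) + entRV p (fun ω => (B ω, C ω))
    - entRV p (fun ω => (A ω, B ω, C ω)) - entRV p C

/-- Privacy against Alice with respect to `g` of a transition kernel `k(m|x,y)`,
for the function `f` being computed. -/
def PrivAlice {𝒳 𝒴 𝒵 𝒢 ℳ : Type*} (f : 𝒳 → 𝒴 → 𝒵) (g : 𝒳 → 𝒴 → 𝒢)
    (k : 𝒳 → 𝒴 → ℳ → ℝ) : Prop :=
  ∀ x y₁ y₂, g x y₁ ≠ g x y₂ → f x y₁ = f x y₂ → ∀ m, k x y₁ m = k x y₂ m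

/-- Privacy against Bob with respect to `h` of a transition kernel `k(m|x,y)`,
for the function `f` being computed. -/
def PrivBob {𝒳 𝒴 𝒵 ℋ ℳ : Type*} (f : 𝒳 → 𝒴 → 𝒵) (h : 𝒳 → 𝒴 → ℋ)
    (k : 𝒳 → 𝒴 → ℳ → ℝ) : Prop :=
  ∀ x₁ x₂ y, h x₁ y ≠ h x₂ y → f x₁ y = f x₂ y → ∀ m, k x₁ y m = k x₂ y m

/-- `Y_Xⁿ`: the vector whose `i`-th entry is `Y₀ᵢ` if `Xᵢ = 0` and `Y₁ᵢ` if `Xᵢ = 1`. -/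
def selSame {Ω : Type*} {n : ℕ} (Xv : Ω → Fin n → Bool)
    (Yv : Ω → Fin n → Bool × Bool) : Ω → Fin n → Bool :=
  fun ω i => if Xv ω i then (Yv ω i).2 else (Yv ω i).1

/-- `Y_{X̄}ⁿ`: the vector whose `i`-th entry is `Y_{1−Xᵢ, i}`. -/
def selOpp {Ω : Type*} {n : ℕ} (Xv : Ω → Fin n → Bool)
    (Yv : Ω → Fin n → Bool × Bool) : Ω → Fin n → Bool :=
  fun ω i => if Xv ω i then (Yv ω i).1 else (Yv ω i).2

/-- The inputs `(Xⁿ, Yⁿ) = (Xⁿ, (Y₀ⁿ, Y₁ⁿ))` are `n` i.i.d. copies of three mutually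
independent uniform bits, i.e. the joint distribution is uniform on the `8^n` values. -/
def UnifIID {Ω : Type*} [Fintype Ω] {n : ℕ} (p : Ω → ℝ)
    (Xv : Ω → Fin n → Bool) (Yv : Ω → Fin n → Bool × Bool) : Prop :=
  ∀ (xv : Fin n → Bool) (yv : Fin n → Bool × Bool),
    probOf p (fun ω => Xv ω = xv ∧ Yv ω = yv) = (1 / 8 : ℝ) ^ n

/-!
Since `M₂` depends on the inputs only through `Yⁿ` and `Xⁿ` is uniform given `Yⁿ`, the triples
`(M₂, Xⁿ, Yⁿ)` and `(M₂, X̄ⁿ, Yⁿ)` have the same law. Hence `(M₂, Xⁿ)` determines `Y_{X̄}ⁿ` as well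
as it determines `Y_Xⁿ`, so `H(Yⁿ | M₂, Xⁿ) ≤ 2nε`; and since `Xⁿ` is independent of `(M₂, Yⁿ)`,
even `H(Yⁿ | M₂) ≤ 2nε`. Symmetrically, negating every `Y₁ᵢ` preserves the law of `(M₁, Xⁿ, Yⁿ)`,
and given `Yⁿ` the selected bits before and after this negation reveal `Xⁿ`, so
`H(Xⁿ | M₁) ≤ 2nε`. As `Y_{X̄}ⁿ` is a function of `(Xⁿ, Yⁿ)`, its entropy given `(M₁, M₂)` is at
most the sum of the two bounds.
-/

open Function InformationTheory

section Law

variable {Ω α β γ : Type*} [Fintype Ω] [DecidableEq α] [DecidableEq β] [DecidableEq γ] {p : Ω → ℝ}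

lemma nonempty_of_isPMF (hp : IsPMF p) : Nonempty Ω := by
  by_contra hΩ
  have := not_nonempty_iff.1 hΩ
  simpa using hp.2

lemma distOf_nonneg (hp : IsPMF p) (A : Ω → α) (a : α) : 0 ≤ distOf p A a :=
  Finset.sum_nonneg fun ω _ => ite_nonneg (hp.1 ω) le_rfl

lemma distOf_le_distOf (hp : IsPMF p) {A : Ω → α} {B : Ω → β} {a : α} {b : β}
    (h : ∀ ω, A ω = a → B ω = b) : distOf p A a ≤ distOf p B b := by
  refine Finset.sum_le_sum fun ω _ => ?_
  by_cases ha : A ω = a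
  · simp [ha, h ω ha]
  · simpa [ha] using ite_nonneg (hp.1 ω) le_rfl

lemma distOf_eq_zero_of_imp (hp : IsPMF p) {A : Ω → α} {B : Ω → β} {a : α} {b : β}
    (h : ∀ ω, A ω = a → B ω = b) (hb : distOf p B b = 0) : distOf p A a = 0 :=
  le_antisymm (hb ▸ distOf_le_distOf hp h) (distOf_nonneg hp A a)

lemma distOf_pos (hp : IsPMF p) (A : Ω → α) {ω : Ω} (hω : 0 < p ω) : 0 < distOf p A (A ω) :=
  Finset.sum_pos' (fun ω' _ => ite_nonneg (hp.1 ω') le_rfl) ⟨ω, Finset.mem_univ ω, by simpa⟩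

lemma distOf_equiv_comp (A : Ω → α) (e : α ≃ β) (b : β) :
    distOf p (fun ω => e (A ω)) b = distOf p A (e.symm b) := by
  simp only [distOf, Equiv.eq_symm_apply]

variable [Fintype α]

lemma sum_distOf_mul (p : Ω → ℝ) (A : Ω → α) (g : α → ℝ) :
    ∑ a, distOf p A a * g a = ∑ ω, p ω * g (A ω) := by
  simp only [distOf, Finset.sum_mul]
  rw [Finset.sum_comm]
  simp [ite_mul]

lemma isPMF_distOf (hp : IsPMF p) (A : Ω → α) : IsPMF (distOf p A) :=
  ⟨distOf_nonneg hp A, by simpa [hp.2] using sum_distOf_mul p A fun _ => 1⟩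

lemma distOf_comp (p : Ω → ℝ) (A : Ω → α) (g : α → β) :
    distOf p (fun ω => g (A ω)) = distOf (distOf p A) g := by
  funext b
  simpa [distOf] using (sum_distOf_mul p A fun a => if g a = b then 1 else 0).symm

lemma sum_distOf_prodMk (p : Ω → ℝ) (A : Ω → α) (C : Ω → γ) (c : γ) :
    ∑ a, distOf p (fun ω => (A ω, C ω)) (a, c) = distOf p C c := by
  simp only [distOf, Prod.mk.injEq]
  rw [Finset.sum_comm]
  simp [ite_and]

end Law

section Entropy

variable {Ω α β : Type*} [Fintype Ω] [DecidableEq α] {p : Ω → ℝ}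

lemma entRV_comp_eq_of_distOf_eq [Finite α] [Fintype β] [DecidableEq β] {A B : Ω → α}
    (h : distOf p A = distOf p B) (g : α → β) :
    entRV p (fun ω => g (A ω)) = entRV p (fun ω => g (B ω)) := by
  have := Fintype.ofFinite α
  rw [entRV, entRV, distOf_comp p A g, distOf_comp p B g, h]

/-- The cross entropy `-E[log r(A)]` (in nats) of `A` relative to a reference distribution `r`,
used to compare `H(A)` with other entropies. -/
noncomputable def crossEnt (p : Ω → ℝ) (A : Ω → β) (r : β → ℝ) : ℝ :=
  -∑ ω, p ω * Real.log (r (A ω))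

variable [Fintype α]

lemma entRV_eq_crossEnt (p : Ω → ℝ) (A : Ω → α) : entRV p A = crossEnt p A (distOf p A) := by
  rw [entRV, entD, crossEnt, sum_distOf_mul p A fun a => Real.log (distOf p A a)]

lemma mul_log_sub_mul_log_eq_klFun {q r : ℝ} (h : r = 0 → q = 0) :
    q * Real.log q - q * Real.log r = r * klFun (q / r) + (q - r) := by
  rcases eq_or_ne q 0 with rfl | hq
  · simp [klFun_zero]
  · have hr : r ≠ 0 := mt h hq
    rw [klFun_apply, Real.log_div hq hr]
    field_simp
    ring

lemma crossEnt_sub_entRV (hp : IsPMF p) (A : Ω → α) {r : α → ℝ} (hr : IsPMF r)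
    (hac : ∀ a, r a = 0 → distOf p A a = 0) :
    crossEnt p A r - entRV p A = ∑ a, r a * klFun (distOf p A a / r a) := by
  have hpointwise := Fintype.sum_congr _ _ fun a => mul_log_sub_mul_log_eq_klFun (hac a)
  rw [Finset.sum_sub_distrib, Finset.sum_add_distrib, Finset.sum_sub_distrib,
    (isPMF_distOf hp A).2, hr.2, sum_distOf_mul p A fun a => Real.log (r a)] at hpointwise
  rw [crossEnt, entRV, entD]
  linarith

lemma mul_klFun_div_nonneg {q r : ℝ} (hq : 0 ≤ q) (hr : 0 ≤ r) : 0 ≤ r * klFun (q / r) :=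
  mul_nonneg hr (klFun_nonneg (div_nonneg hq hr))

theorem entRV_le_crossEnt (hp : IsPMF p) (A : Ω → α) {r : α → ℝ} (hr : IsPMF r)
    (hac : ∀ a, r a = 0 → distOf p A a = 0) : entRV p A ≤ crossEnt p A r := by
  rw [← sub_nonneg, crossEnt_sub_entRV hp A hr hac]
  exact Finset.sum_nonneg fun a _ => mul_klFun_div_nonneg (distOf_nonneg hp A a) (hr.1 a)

theorem distOf_eq_of_entRV_eq_crossEnt (hp : IsPMF p) {A : Ω → α} {r : α → ℝ} (hr : IsPMF r)
    (hac : ∀ a, r a = 0 → distOf p A a = 0) (h : entRV p A = crossEnt p A r) :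
    distOf p A = r := by
  have hsum := crossEnt_sub_entRV hp A hr hac
  rw [h, sub_self, eq_comm, Finset.sum_eq_zero_iff_of_nonneg fun a _ =>
    mul_klFun_div_nonneg (distOf_nonneg hp A a) (hr.1 a)] at hsum
  funext a
  rcases mul_eq_zero.1 (hsum a (Finset.mem_univ a)) with hra | hkl
  · rw [hra, hac a hra]
  · rw [klFun_eq_zero_iff (div_nonneg (distOf_nonneg hp A a) (hr.1 a))] at hkl
    exact eq_of_div_eq_one hkl

theorem entRV_le_log_card (hp : IsPMF p) (A : Ω → α) : entRV p A ≤ Real.log (Fintype.card α) := by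
  have : Nonempty α := (nonempty_of_isPMF hp).map A
  have huniform : IsPMF fun _ : α => (Fintype.card α : ℝ)⁻¹ := ⟨fun _ => by positivity, by simp⟩
  simpa [crossEnt, ← Finset.sum_mul, hp.2] using entRV_le_crossEnt hp A huniform (by simp)

variable [Fintype β] [DecidableEq β]

theorem entRV_le_of_factorsThrough (hp : IsPMF p) {A : Ω → α} {B : Ω → β}
    (h : B.FactorsThrough A) : entRV p B ≤ entRV p A := by
  rw [entRV_eq_crossEnt, entRV_eq_crossEnt, crossEnt, crossEnt, neg_le_neg_iff]
  refine Finset.sum_le_sum fun ω _ => ?_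
  rcases (hp.1 ω).eq_or_lt with hω | hω
  · simp [← hω]
  · have hle : distOf p A (A ω) ≤ distOf p B (B ω) := distOf_le_distOf hp fun ω' hA => h hA
    exact mul_le_mul_of_nonneg_left (Real.log_le_log (distOf_pos hp A hω) hle) hω.le

lemma entRV_congr (hp : IsPMF p) {A : Ω → α} {B : Ω → β}
    (h : ∀ ω ω', A ω = A ω' ↔ B ω = B ω') : entRV p A = entRV p B :=
  le_antisymm (entRV_le_of_factorsThrough hp fun ω ω' => (h ω ω').2)
    (entRV_le_of_factorsThrough hp fun ω ω' => (h ω ω').1)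

end Entropy

section CondMutInfo

variable {Ω α β γ : Type*} [Fintype Ω] [DecidableEq α] [DecidableEq β] [DecidableEq γ] {p : Ω → ℝ}

/-- The law `P(a, c) P(b, c) / P(c)` that `(A, B, C)` would have if `A` and `B` were conditionally
independent given `C`. Where `P(c) = 0`, division by zero gives the correct value `0`. -/
noncomputable def condIndepLaw (p : Ω → ℝ) (A : Ω → α) (B : Ω → β) (C : Ω → γ) :
    α × β × γ → ℝ :=
  fun (a, b, c) => distOf p (fun ω => (A ω, C ω)) (a, c) * distOf p (fun ω => (B ω, C ω)) (b, c)
    / distOf p C c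

lemma distOf_eq_zero_of_condIndepLaw_eq_zero (hp : IsPMF p) {A : Ω → α} {B : Ω → β} {C : Ω → γ}
    (t : α × β × γ) (ht : condIndepLaw p A B C t = 0) :
    distOf p (fun ω => (A ω, B ω, C ω)) t = 0 := by
  obtain ⟨a, b, c⟩ := t
  simp only [condIndepLaw, div_eq_zero_iff, mul_eq_zero] at ht
  rcases ht with (hac | hbc) | hc
  · exact distOf_eq_zero_of_imp hp (by simp +contextual) hac
  · exact distOf_eq_zero_of_imp hp (by simp +contextual) hbc
  · exact distOf_eq_zero_of_imp hp (by simp +contextual) hc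

variable [Fintype α] [Fintype β] [Fintype γ]

lemma isPMF_condIndepLaw (hp : IsPMF p) (A : Ω → α) (B : Ω → β) (C : Ω → γ) :
    IsPMF (condIndepLaw p A B C) := by
  refine ⟨fun _ => div_nonneg (mul_nonneg (distOf_nonneg hp _ _) (distOf_nonneg hp _ _))
    (distOf_nonneg hp _ _), ?_⟩
  calc ∑ t, condIndepLaw p A B C t
      = ∑ c, (∑ a, distOf p (fun ω => (A ω, C ω)) (a, c))
          * (∑ b, distOf p (fun ω => (B ω, C ω)) (b, c)) / distOf p C c := by
        simp only [Fintype.sum_prod_type_right, condIndepLaw, Finset.sum_mul_sum, Finset.sum_div]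
        exact Fintype.sum_congr _ _ fun c => Finset.sum_comm
    _ = ∑ c, distOf p C c := by simp only [sum_distOf_prodMk, mul_self_div_self]
    _ = 1 := (isPMF_distOf hp C).2

lemma crossEnt_condIndepLaw (hp : IsPMF p) (A : Ω → α) (B : Ω → β) (C : Ω → γ) :
    crossEnt p (fun ω => (A ω, B ω, C ω)) (condIndepLaw p A B C) =
      entRV p (fun ω => (A ω, C ω)) + entRV p (fun ω => (B ω, C ω)) - entRV p C := by
  have hlog : ∀ ω, p ω * Real.log (condIndepLaw p A B C (A ω, B ω, C ω)) =
      p ω * Real.log (distOf p (fun ω => (A ω, C ω)) (A ω, C ω))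
        + p ω * Real.log (distOf p (fun ω => (B ω, C ω)) (B ω, C ω))
        - p ω * Real.log (distOf p C (C ω)) := by
    intro ω
    rcases (hp.1 ω).eq_or_lt with hω | hω
    · simp [← hω]
    · have hAC := (distOf_pos hp (fun ω => (A ω, C ω)) hω).ne'
      have hBC := (distOf_pos hp (fun ω => (B ω, C ω)) hω).ne'
      rw [condIndepLaw, Real.log_div (mul_ne_zero hAC hBC) (distOf_pos hp C hω).ne',
        Real.log_mul hAC hBC]
      ring
  simp only [entRV_eq_crossEnt, crossEnt, hlog, Finset.sum_sub_distrib, Finset.sum_add_distrib]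
  ring

lemma condMutInfo_eq_crossEnt_sub_entRV (hp : IsPMF p) (A : Ω → α) (B : Ω → β) (C : Ω → γ) :
    condMutInfo p A B C = crossEnt p (fun ω => (A ω, B ω, C ω)) (condIndepLaw p A B C)
      - entRV p (fun ω => (A ω, B ω, C ω)) := by
  rw [crossEnt_condIndepLaw hp, condMutInfo]
  ring

theorem condMutInfo_nonneg (hp : IsPMF p) (A : Ω → α) (B : Ω → β) (C : Ω → γ) :
    0 ≤ condMutInfo p A B C := by
  rw [condMutInfo_eq_crossEnt_sub_entRV hp, sub_nonneg]
  exact entRV_le_crossEnt hp _ (isPMF_condIndepLaw hp A B C)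
    (distOf_eq_zero_of_condIndepLaw_eq_zero hp)

theorem distOf_eq_condIndepLaw (hp : IsPMF p) {A : Ω → α} {B : Ω → β} {C : Ω → γ}
    (h : condMutInfo p A B C = 0) : distOf p (fun ω => (A ω, B ω, C ω)) = condIndepLaw p A B C := by
  rw [condMutInfo_eq_crossEnt_sub_entRV hp, sub_eq_zero] at h
  exact distOf_eq_of_entRV_eq_crossEnt hp (isPMF_condIndepLaw hp A B C)
    (distOf_eq_zero_of_condIndepLaw_eq_zero hp) h.symm

theorem distOf_eq_of_condMutInfo_eq_zero (hp : IsPMF p) {A : Ω → α} {B B' : Ω → β} {C : Ω → γ}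
    (h : condMutInfo p A B C = 0) (h' : condMutInfo p A B' C = 0)
    (hlaw : distOf p (fun ω => (B ω, C ω)) = distOf p (fun ω => (B' ω, C ω))) :
    distOf p (fun ω => (A ω, B ω, C ω)) = distOf p (fun ω => (A ω, B' ω, C ω)) := by
  rw [distOf_eq_condIndepLaw hp h, distOf_eq_condIndepLaw hp h']
  funext ⟨a, b, c⟩
  rw [condIndepLaw, condIndepLaw, hlaw]

lemma condMutInfo_comp_of_injective {β' : Type*} [Fintype β'] [DecidableEq β'] (hp : IsPMF p)
    (A : Ω → α) (B : Ω → β) (C : Ω → γ) {e : β → β'} (he : Injective e) :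
    condMutInfo p A (fun ω => e (B ω)) C = condMutInfo p A B C := by
  have hBC : entRV p (fun ω => (e (B ω), C ω)) = entRV p (fun ω => (B ω, C ω)) :=
    entRV_congr hp (by simp [he.eq_iff])
  have hABC : entRV p (fun ω => (A ω, e (B ω), C ω)) = entRV p (fun ω => (A ω, B ω, C ω)) :=
    entRV_congr hp (by simp [he.eq_iff])
  rw [condMutInfo, condMutInfo, hBC, hABC]

theorem mutInfo_nonneg (hp : IsPMF p) (A : Ω → α) (B : Ω → β) : 0 ≤ mutInfo p A B := by
  have h := condMutInfo_nonneg hp A B fun _ => ()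
  have hA : entRV p (fun ω => (A ω, ())) = entRV p A := entRV_congr hp (by simp)
  have hB : entRV p (fun ω => (B ω, ())) = entRV p B := entRV_congr hp (by simp)
  have hAB : entRV p (fun ω => (A ω, B ω, ())) = entRV p (fun ω => (A ω, B ω)) :=
    entRV_congr hp (by simp)
  have hunit : entRV p (fun _ => ()) = 0 := by simp [entRV, entD, distOf, hp.2]
  rwa [condMutInfo, hA, hB, hAB, hunit, sub_zero] at h

end CondMutInfo

section CondEnt

variable {Ω α β γ δ : Type*} [Fintype Ω] [DecidableEq α] [Fintype β] [DecidableEq β]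
  [Fintype γ] [DecidableEq γ] [Fintype δ] [DecidableEq δ] {p : Ω → ℝ}

lemma condEnt_comp_eq_of_distOf_eq [Finite α] {A A' : Ω → α}
    (h : distOf p A = distOf p A') (f : α → β) (g : α → γ) :
    condEnt p (fun ω => f (A ω)) (fun ω => g (A ω)) =
      condEnt p (fun ω => f (A' ω)) (fun ω => g (A' ω)) :=
  congrArg₂ (· - ·) (entRV_comp_eq_of_distOf_eq h fun a => (f a, g a))
    (entRV_comp_eq_of_distOf_eq h g)

variable [Fintype α]

lemma mutInfo_eq_entRV_sub_condEnt (hp : IsPMF p) (A : Ω → α) (B : Ω → β) :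
    mutInfo p A B = entRV p B - condEnt p B A := by
  have hswap : entRV p (fun ω => (A ω, B ω)) = entRV p (fun ω => (B ω, A ω)) :=
    entRV_congr hp (by simp [and_comm])
  rw [mutInfo, condEnt, hswap]
  ring

lemma condEnt_le_of_factorsThrough_left (hp : IsPMF p) {A : Ω → α} {B : Ω → β} {C : Ω → γ}
    (h : A.FactorsThrough fun ω => (B ω, C ω)) : condEnt p A C ≤ condEnt p B C :=
  have hAC : (fun ω => (A ω, C ω)).FactorsThrough fun ω => (B ω, C ω) :=
    fun _ _ hBC => Prod.ext (h hBC) (Prod.ext_iff.1 hBC).2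
  sub_le_sub_right (entRV_le_of_factorsThrough hp hAC) _

lemma condEnt_le_of_factorsThrough_right (hp : IsPMF p) (A : Ω → α) {C : Ω → γ} {D : Ω → δ}
    (h : D.FactorsThrough C) : condEnt p A C ≤ condEnt p A D := by
  have hCMI := condMutInfo_nonneg hp A C D
  have hC : entRV p (fun ω => (C ω, D ω)) = entRV p C :=
    entRV_congr hp fun ω ω' => by simpa using @h ω ω'
  have hAC : entRV p (fun ω => (A ω, C ω, D ω)) = entRV p (fun ω => (A ω, C ω)) :=
    entRV_congr hp fun ω ω' => by simpa using fun _ => @h ω ω'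
  rw [condMutInfo, hC, hAC] at hCMI
  rw [condEnt, condEnt]
  linarith

lemma condEnt_congr_right (hp : IsPMF p) (A : Ω → α) {C : Ω → γ} {D : Ω → δ}
    (h : ∀ ω ω', C ω = C ω' ↔ D ω = D ω') : condEnt p A C = condEnt p A D :=
  le_antisymm (condEnt_le_of_factorsThrough_right hp A fun ω ω' => (h ω ω').1)
    (condEnt_le_of_factorsThrough_right hp A fun ω ω' => (h ω ω').2)

lemma condEnt_prodMk_le (hp : IsPMF p) (A : Ω → α) (B : Ω → β) (C : Ω → γ) :
    condEnt p (fun ω => (A ω, B ω)) C ≤ condEnt p A C + condEnt p B C := by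
  have hCMI := condMutInfo_nonneg hp A B C
  have hassoc : entRV p (fun ω => ((A ω, B ω), C ω)) = entRV p (fun ω => (A ω, B ω, C ω)) :=
    entRV_congr hp (by simp [and_assoc])
  rw [condMutInfo] at hCMI
  rw [condEnt, condEnt, condEnt, hassoc]
  linarith

lemma condEnt_comp_of_injective (hp : IsPMF p) {M : Ω → α} {B : Ω → β} {C : Ω → γ}
    (hM : condMutInfo p M B C = 0) {e : β → β} (he : Injective e)
    (hlaw : distOf p (fun ω => (e (B ω), C ω)) = distOf p (fun ω => (B ω, C ω))) (f : β → γ → δ) :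
    condEnt p (fun ω => f (e (B ω)) (C ω)) (fun ω => (M ω, B ω)) =
      condEnt p (fun ω => f (B ω) (C ω)) (fun ω => (M ω, B ω)) := by
  have htriple := distOf_eq_of_condMutInfo_eq_zero hp
    ((condMutInfo_comp_of_injective hp M B C he).trans hM) hM hlaw
  calc condEnt p (fun ω => f (e (B ω)) (C ω)) (fun ω => (M ω, B ω))
      = condEnt p (fun ω => f (e (B ω)) (C ω)) (fun ω => (M ω, e (B ω))) :=
        condEnt_congr_right hp _ (by simp [he.eq_iff])
    _ = condEnt p (fun ω => f (B ω) (C ω)) (fun ω => (M ω, B ω)) :=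
        condEnt_comp_eq_of_distOf_eq htriple (fun t => f t.2.1 t.2.2) fun t => (t.1, t.2.1)

/-- The difference of the two sides is `I(B; C | M) ≤ I(B; C, M) = I(B; C) + I(B; M | C) = 0`. -/
lemma condEnt_le_condEnt_prodMk (hp : IsPMF p) {M : Ω → α} {B : Ω → β} {C : Ω → γ}
    (hM : condMutInfo p M B C = 0) (hBC : mutInfo p B C = 0) :
    condEnt p C M ≤ condEnt p C (fun ω => (M ω, B ω)) := by
  have hMB := mutInfo_nonneg hp M B
  have hCM : entRV p (fun ω => (C ω, M ω)) = entRV p (fun ω => (M ω, C ω)) :=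
    entRV_congr hp (by simp [and_comm])
  have hCMB : entRV p (fun ω => (C ω, M ω, B ω)) = entRV p (fun ω => (M ω, B ω, C ω)) :=
    entRV_congr hp fun ω ω' => by simp only [Prod.mk.injEq]; tauto
  rw [condMutInfo] at hM
  rw [mutInfo] at hBC hMB
  rw [condEnt, condEnt, hCM, hCMB]
  linarith

end CondEnt

section Uniform

variable {Ω α β γ δ : Type*} [Fintype Ω] [Fintype α] [DecidableEq α] [Fintype β] [DecidableEq β]
  [Fintype γ] [DecidableEq γ] [Fintype δ] [DecidableEq δ] {p : Ω → ℝ}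

/-- `A` is uniformly distributed on its finite codomain; used for the joint law of the inputs. -/
def IsUniformRV (p : Ω → ℝ) (A : Ω → α) : Prop :=
  ∀ a, distOf p A a = (Fintype.card α : ℝ)⁻¹

namespace IsUniformRV

lemma equiv_comp {A : Ω → α} (hA : IsUniformRV p A) (e : α ≃ β) :
    IsUniformRV p (fun ω => e (A ω)) := fun b => by
  rw [distOf_equiv_comp, hA, Fintype.card_congr e]

lemma entRV_eq (hp : IsPMF p) {A : Ω → α} (hA : IsUniformRV p A) :
    entRV p A = Real.log (Fintype.card α) := by
  have hdist : distOf p A = fun _ => (Fintype.card α : ℝ)⁻¹ := funext hA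
  simp [entRV_eq_crossEnt, crossEnt, hdist, ← Finset.sum_mul, hp.2]

lemma mutInfo_eq_zero (hp : IsPMF p) {A : Ω → α} {B : Ω → β}
    (hAB : IsUniformRV p fun ω => (A ω, B ω)) : mutInfo p A B = 0 := by
  obtain ⟨ω⟩ := nonempty_of_isPMF hp
  have : Nonempty α := ⟨A ω⟩
  have : Nonempty β := ⟨B ω⟩
  refine le_antisymm ?_ (mutInfo_nonneg hp A B)
  rw [mutInfo, hAB.entRV_eq hp, Fintype.card_prod, Nat.cast_mul, Real.log_mul (by simp) (by simp)]
  linarith [entRV_le_log_card hp A, entRV_le_log_card hp B]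

lemma log_card_le_entRV_add_log_card {κ : Type*} [Fintype κ] (hp : IsPMF p) {A : Ω → α}
    (hA : IsUniformRV p A) {B : Ω → β} {C : Ω → κ} (h : A.FactorsThrough fun ω => (B ω, C ω)) :
    Real.log (Fintype.card α) ≤ entRV p B + Real.log (Fintype.card κ) := by
  classical
  have hsubadd := mutInfo_nonneg hp B C
  rw [mutInfo] at hsubadd
  rw [← hA.entRV_eq hp]
  linarith [entRV_le_of_factorsThrough hp h, entRV_le_log_card hp C]

theorem condEnt_le_two_mul (hp : IsPMF p) {M : Ω → α} {B : Ω → β} {C : Ω → γ}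
    (hM : condMutInfo p M B C = 0) (hBC : IsUniformRV p fun ω => (B ω, C ω)) (e : β ≃ β)
    (f : β → γ → δ) (hf : ∀ b, Injective fun c => (f b c, f (e b) c)) :
    condEnt p C M ≤ 2 * condEnt p (fun ω => f (B ω) (C ω)) (fun ω => (M ω, B ω)) := by
  have hlaw : distOf p (fun ω => (e (B ω), C ω)) = distOf p (fun ω => (B ω, C ω)) :=
    funext fun t => (hBC.equiv_comp (e.prodCongr (Equiv.refl γ)) t).trans (hBC t).symm
  have hdet : C.FactorsThrough
      fun ω => ((f (B ω) (C ω), f (e (B ω)) (C ω)), (M ω, B ω)) := by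
    intro ω ω' h
    simp only [Prod.mk.injEq] at h
    obtain ⟨⟨hf₁, hf₂⟩, -, hB⟩ := h
    rw [hB] at hf₁ hf₂
    exact hf (B ω') (Prod.ext hf₁ hf₂)
  calc condEnt p C M
      ≤ condEnt p C (fun ω => (M ω, B ω)) :=
        condEnt_le_condEnt_prodMk hp hM (hBC.mutInfo_eq_zero hp)
    _ ≤ condEnt p (fun ω => (f (B ω) (C ω), f (e (B ω)) (C ω))) (fun ω => (M ω, B ω)) :=
        condEnt_le_of_factorsThrough_left hp hdet
    _ ≤ condEnt p (fun ω => f (B ω) (C ω)) (fun ω => (M ω, B ω))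
          + condEnt p (fun ω => f (e (B ω)) (C ω)) (fun ω => (M ω, B ω)) :=
        condEnt_prodMk_le hp _ _ _
    _ = 2 * condEnt p (fun ω => f (B ω) (C ω)) (fun ω => (M ω, B ω)) := by
        rw [condEnt_comp_of_injective hp hM e.injective hlaw f, two_mul]

end IsUniformRV

end Uniform

section Select

variable {ι : Type*}

/-- The selected bits `Y_X`: the value-level form of `selSame`, of which `selOpp` is the instance
with negated selector. -/
def selectBits (x : ι → Bool) (y : ι → Bool × Bool) : ι → Bool :=
  fun i => if x i then (y i).2 else (y i).1

/-- The symmetry `Xⁿ ↦ X̄ⁿ` of the selectors, which exchanges `Y_Xⁿ` and `Y_{X̄}ⁿ`. -/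
def notEquiv : (ι → Bool) ≃ (ι → Bool) :=
  Equiv.piCongrRight fun _ => Equiv.boolNot

/-- The symmetry of the bit pairs that negates every `Y₁ᵢ`; it changes the `i`-th selected bit
exactly when `Xᵢ = 1`. -/
def notSndEquiv : (ι → Bool × Bool) ≃ (ι → Bool × Bool) :=
  Equiv.piCongrRight fun _ => (Equiv.refl Bool).prodCongr Equiv.boolNot

lemma selectBits_notEquiv_injective (x : ι → Bool) :
    Injective fun y => (selectBits x y, selectBits (notEquiv x) y) := by
  intro y y' h
  simp only [Prod.mk.injEq, funext_iff, selectBits, notEquiv, Equiv.piCongrRight_apply,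
    Pi.map_apply, Equiv.boolNot_apply] at h
  funext i
  have hsame := h.1 i
  have hopp := h.2 i
  cases hx : x i <;> simp_all [Prod.ext_iff]

lemma selectBits_notSndEquiv_injective (y : ι → Bool × Bool) :
    Injective fun x => (selectBits x y, selectBits x (notSndEquiv y)) := by
  intro x x' h
  simp only [Prod.mk.injEq, funext_iff, selectBits, notSndEquiv, Equiv.piCongrRight_apply,
    Pi.map_apply, Equiv.prodCongr_apply, Prod.map_snd, Prod.map_fst, Equiv.boolNot_apply,
    Equiv.refl_apply] at h
  funext i
  have hsame := h.1 i
  have hflip := h.2 i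
  cases hx : x i <;> cases hx' : x' i <;> simp_all

end Select

section Inputs

variable {Ω : Type*} {n : ℕ} {Xv : Ω → Fin n → Bool} {Yv : Ω → Fin n → Bool × Bool}

lemma selSame_eq_selectBits (Xv : Ω → Fin n → Bool) (Yv : Ω → Fin n → Bool × Bool) :
    selSame Xv Yv = fun ω => selectBits (Xv ω) (Yv ω) := rfl

lemma selOpp_eq_selectBits (Xv : Ω → Fin n → Bool) (Yv : Ω → Fin n → Bool × Bool) :
    selOpp Xv Yv = fun ω => selectBits (notEquiv (Xv ω)) (Yv ω) := by
  funext ω i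
  cases hx : Xv ω i <;> simp [selOpp, selectBits, notEquiv, hx]

lemma selOpp_factorsThrough (Xv : Ω → Fin n → Bool) (Yv : Ω → Fin n → Bool × Bool) :
    (selOpp Xv Yv).FactorsThrough fun ω => (Xv ω, Yv ω) := by
  intro ω ω' h
  simp only [Prod.mk.injEq] at h
  simp only [selOpp_eq_selectBits, h]

lemma factorsThrough_selOpp_selSame (Xv : Ω → Fin n → Bool) (Yv : Ω → Fin n → Bool × Bool) :
    (fun ω => (Xv ω, Yv ω)).FactorsThrough
      fun ω => (selOpp Xv Yv ω, (selSame Xv Yv ω, Xv ω)) := by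
  intro ω ω' h
  simp only [selOpp_eq_selectBits, selSame_eq_selectBits, Prod.mk.injEq] at h
  obtain ⟨hopp, hsame, hX⟩ := h
  rw [hX] at hopp hsame
  exact Prod.ext hX (selectBits_notEquiv_injective (Xv ω') (Prod.ext hsame hopp))

variable [Fintype Ω] {p : Ω → ℝ}

lemma isUniformRV_of_unifIID (hiid : UnifIID p Xv Yv) :
    IsUniformRV p fun ω => (Xv ω, Yv ω) := by
  rintro ⟨x, y⟩
  have hcard : (Fintype.card ((Fin n → Bool) × (Fin n → Bool × Bool)) : ℝ) = 8 ^ n := by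
    norm_num [← mul_pow]
  rw [hcard, ← inv_pow, ← one_div, ← hiid x y]
  simp only [distOf, probOf, Prod.mk.injEq]
  congr! 2

lemma mul_log_two_le_entRV_selOpp (hp : IsPMF p) (hiid : UnifIID p Xv Yv) :
    n * Real.log 2 ≤ entRV p (selOpp Xv Yv) := by
  have h := (isUniformRV_of_unifIID hiid).log_card_le_entRV_add_log_card hp
    (factorsThrough_selOpp_selSame Xv Yv)
  have hlog4 : Real.log 4 = 2 * Real.log 2 := by
    rw [show (4 : ℝ) = 2 ^ 2 by norm_num, Real.log_pow, Nat.cast_ofNat]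
  norm_num [Real.log_mul, Real.log_pow, hlog4] at h
  linarith

end Inputs

/-- **Leakage lower bound from Example 2.** If `M₁ ⊥ Yⁿ | Xⁿ` and `M₂ ⊥ Xⁿ | Yⁿ`, and
`H(Y_Xⁿ | M₂, Xⁿ) ≤ nε` and `H(Y_Xⁿ | M₁, Yⁿ) ≤ nε` for some `ε ≥ 0`, then
`H(Y_{X̄}ⁿ | M₁, M₂) ≤ 4nε`, and consequently
`I(M₁, M₂; Y_{X̄}ⁿ) ≥ n·log 2 − 4nε` (entropies in nats). -/
theorem leakage_lower_bound {Ω 𝓜₁ 𝓜₂ : Type}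
    [Fintype Ω] [Fintype 𝓜₁] [DecidableEq 𝓜₁] [Fintype 𝓜₂] [DecidableEq 𝓜₂]
    (n : ℕ) (p : Ω → ℝ) (hp : IsPMF p)
    (Xv : Ω → Fin n → Bool) (Yv : Ω → Fin n → Bool × Bool)
    (hiid : UnifIID p Xv Yv)
    (M₁ : Ω → 𝓜₁) (M₂ : Ω → 𝓜₂)
    (hci₁ : condMutInfo p M₁ Yv Xv = 0)
    (hci₂ : condMutInfo p M₂ Xv Yv = 0)
    (ε : ℝ) (hε : 0 ≤ ε)
    (hbob : condEnt p (selSame Xv Yv) (fun ω => (M₂ ω, Xv ω)) ≤ n * ε)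
    (halice : condEnt p (selSame Xv Yv) (fun ω => (M₁ ω, Yv ω)) ≤ n * ε) :
    condEnt p (selOpp Xv Yv) (fun ω => (M₁ ω, M₂ ω)) ≤ 4 * n * ε ∧
    mutInfo p (fun ω => (M₁ ω, M₂ ω)) (selOpp Xv Yv) ≥ n * Real.log 2 - 4 * n * ε := by
  have hXY : IsUniformRV p fun ω => (Xv ω, Yv ω) := isUniformRV_of_unifIID hiid
  have hYX : IsUniformRV p fun ω => (Yv ω, Xv ω) := hXY.equiv_comp (Equiv.prodComm _ _)
  have hY : condEnt p Yv M₂ ≤ 2 * condEnt p (selSame Xv Yv) (fun ω => (M₂ ω, Xv ω)) :=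
    hXY.condEnt_le_two_mul hp hci₂ notEquiv selectBits selectBits_notEquiv_injective
  have hX : condEnt p Xv M₁ ≤ 2 * condEnt p (selSame Xv Yv) (fun ω => (M₁ ω, Yv ω)) :=
    hYX.condEnt_le_two_mul hp hci₁ notSndEquiv (fun y x => selectBits x y)
      selectBits_notSndEquiv_injective
  have hleak : condEnt p (selOpp Xv Yv) (fun ω => (M₁ ω, M₂ ω)) ≤ 4 * n * ε := calc
    _ ≤ condEnt p (fun ω => (Xv ω, Yv ω)) (fun ω => (M₁ ω, M₂ ω)) :=
        condEnt_le_of_factorsThrough_left hp fun _ _ h =>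
          selOpp_factorsThrough Xv Yv (Prod.ext_iff.1 h).1
    _ ≤ condEnt p Xv (fun ω => (M₁ ω, M₂ ω)) + condEnt p Yv (fun ω => (M₁ ω, M₂ ω)) :=
        condEnt_prodMk_le hp _ _ _
    _ ≤ condEnt p Xv M₁ + condEnt p Yv M₂ :=
        add_le_add (condEnt_le_of_factorsThrough_right hp Xv fun _ _ => congrArg Prod.fst)
          (condEnt_le_of_factorsThrough_right hp Yv fun _ _ => congrArg Prod.snd)
    _ ≤ 4 * n * ε := by linarith
  refine ⟨hleak, ?_⟩
  rw [mutInfo_eq_entRV_sub_condEnt hp]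
  linarith [mul_log_two_le_entRV_selOpp hp hiid]
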